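/- The Dirichlet energy of the zero-friction flow field on the exterior of the unit disk is infinite: ∫_{{(x,y) : x²+y² > 1}} |∇u_Z(x,y)|² dx dy = ∞, where |·| denotes the Frobenius norm of the Jacobian matrix. In particular the weighted H¹ norm ( ∫ |∇u_Z|² + (1+r log r)⁻² |u_Z|² )^{1/2} over the exterior of the unit disk is not finite. -/

import Mathlib

/-!
The Dirichlet energy diverges because the Jacobian of `u_Z` decays only like `1 / r`, whose square
is not integrable at infinity in the plane. A single entry on a sector already shows this:
`∂_y u₂ = -x (x² - y²) / r⁴`, so `|∇u_Z|² ≥ 1 / (5 x²)` on the sector `x > 1`, `0 < y < x / 2`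
(`frobSq_lower_bound`). By Tonelli the integral of `1 / (5 x²)` over the sector is
`∫₁^∞ dx / (10 x) = ∞` (`lintegral_sector`). The weighted energy adds a nonnegative term, hence
is infinite as well.
-/

noncomputable section
open MeasureTheory

/-- Partial derivative in the first variable. -/
def pdx (f : ℝ → ℝ → ℝ) (x y : ℝ) : ℝ := deriv (fun t => f t y) x

/-- Partial derivative in the second variable. -/
def pdy (f : ℝ → ℝ → ℝ) (x y : ℝ) : ℝ := deriv (fun t => f x t) y

/-- Squared Frobenius norm of the Jacobian matrix of the vector field `u = (u1, u2)`. -/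
def frobSq (u1 u2 : ℝ → ℝ → ℝ) (x y : ℝ) : ℝ :=
  pdx u1 x y ^ 2 + pdy u1 x y ^ 2 + pdx u2 x y ^ 2 + pdy u2 x y ^ 2

/-- First component of the zero-friction flow field. -/
def uZ1 (x y : ℝ) : ℝ := y ^ 2 / (x ^ 2 + y ^ 2) + Real.log (Real.sqrt (x ^ 2 + y ^ 2))

/-- Second component of the zero-friction flow field. -/
def uZ2 (x y : ℝ) : ℝ := -(x * y) / (x ^ 2 + y ^ 2)

lemma pdy_uZ2 {x : ℝ} (hx : 0 < x) (y : ℝ) :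
    pdy uZ2 x y = -(x * (x ^ 2 - y ^ 2)) / (x ^ 2 + y ^ 2) ^ 2 := by
  have hne : x ^ 2 + y ^ 2 ≠ 0 := by positivity
  have hnum : HasDerivAt (fun t : ℝ => -(x * t)) (-(x * 1)) y :=
    ((hasDerivAt_id y).const_mul x).neg
  have hden : HasDerivAt (fun t : ℝ => x ^ 2 + t ^ 2) (2 * y) y := by
    simpa using (hasDerivAt_pow 2 y).const_add (x ^ 2)
  have h := (hnum.fun_div hden hne).deriv
  unfold pdy uZ2
  rw [h]
  congr 1
  ring

lemma frobSq_lower_bound {x y : ℝ} (hx : 1 < x) (hy : 0 < y) (hyx : y < x / 2) :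
    1 / (5 * x ^ 2) ≤ frobSq uZ1 uZ2 x y := by
  have hx0 : 0 < x := by linarith
  have hentry : pdy uZ2 x y ^ 2 ≤ frobSq uZ1 uZ2 x y := by
    unfold frobSq
    nlinarith [sq_nonneg (pdx uZ1 x y), sq_nonneg (pdy uZ1 x y), sq_nonneg (pdx uZ2 x y)]
  refine le_trans ?_ hentry
  rw [pdy_uZ2 hx0, div_pow, div_le_div_iff₀ (by positivity) (by positivity)]
  have hy2 : y ^ 2 ≤ x ^ 2 / 4 := by nlinarith
  -- With `y² ≤ x² / 4`, we have `r² ≤ 5 x² / 4` and `x² - y² ≥ 3 x² / 4`, and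
  -- `(5 / 4)⁴ ≤ 5 (3 / 4)²`.
  have hr : (x ^ 2 + y ^ 2) ^ 4 ≤ (5 / 4 * x ^ 2) ^ 4 :=
    pow_le_pow_left₀ (by positivity) (by linarith) 4
  have hd : (3 / 4 * x ^ 2) ^ 2 ≤ (x ^ 2 - y ^ 2) ^ 2 :=
    pow_le_pow_left₀ (by positivity) (by linarith) 2
  have hm := mul_le_mul_of_nonneg_left hd (by positivity : 0 ≤ 5 * x ^ 4)
  have h8 : 0 ≤ x ^ 8 := by positivity
  nlinarith

/-- The sector `x > 1`, `0 < y < x / 2`. -/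
def sector : Set (ℝ × ℝ) := {p | 1 < p.1 ∧ 0 < p.2 ∧ p.2 < p.1 / 2}

lemma measurableSet_sector : MeasurableSet sector := by
  have h1 : IsOpen {p : ℝ × ℝ | 1 < p.1} := isOpen_lt (by fun_prop) (by fun_prop)
  have h2 : IsOpen {p : ℝ × ℝ | 0 < p.2} := isOpen_lt (by fun_prop) (by fun_prop)
  have h3 : IsOpen {p : ℝ × ℝ | p.2 < p.1 / 2} := isOpen_lt (by fun_prop) (by fun_prop)
  exact (h1.inter (h2.inter h3)).measurableSet

lemma lintegral_Ioi_inv : (∫⁻ x in Set.Ioi (1 : ℝ), ENNReal.ofReal x⁻¹) = ⊤ := by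
  by_contra h
  refine not_integrableOn_Ioi_inv (a := 1) ?_
  refine (lintegral_ofReal_ne_top_iff_integrable ?_ ?_).mp h
  · exact measurable_inv.aestronglyMeasurable
  · filter_upwards [ae_restrict_mem measurableSet_Ioi] with x hx
    have : (0 : ℝ) < x := lt_trans one_pos hx
    simpa using this.le

lemma lintegral_sector :
    (∫⁻ p in sector, ENNReal.ofReal (1 / (5 * p.1 ^ 2))) = ⊤ := by
  have hmeas : Measurable fun p : ℝ × ℝ => ENNReal.ofReal (1 / (5 * p.1 ^ 2)) := by fun_prop
  rw [← lintegral_indicator measurableSet_sector, Measure.volume_eq_prod,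
    lintegral_prod _ (hmeas.indicator measurableSet_sector).aemeasurable]
  have hinner : ∀ x : ℝ, (∫⁻ y, sector.indicator
      (fun p : ℝ × ℝ => ENNReal.ofReal (1 / (5 * p.1 ^ 2))) (x, y)) =
      (Set.Ioi (1 : ℝ)).indicator (fun x => ENNReal.ofReal (1 / 10) * ENNReal.ofReal x⁻¹) x := by
    intro x
    by_cases hx : 1 < x
    · have hx0 : 0 < x := by linarith
      have hslice : (fun y => sector.indicator
          (fun p : ℝ × ℝ => ENNReal.ofReal (1 / (5 * p.1 ^ 2))) (x, y)) =
          (Set.Ioo 0 (x / 2)).indicator (fun _ => ENNReal.ofReal (1 / (5 * x ^ 2))) := by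
        funext y
        simp [Set.indicator_apply, sector, hx]
      rw [hslice, lintegral_indicator_const measurableSet_Ioo, Real.volume_Ioo,
        Set.indicator_of_mem (Set.mem_Ioi.mpr hx), ← ENNReal.ofReal_mul (by positivity),
        ← ENNReal.ofReal_mul (by positivity)]
      congr 1
      field_simp
      ring
    · simp [sector, hx]
  simp_rw [hinner]
  rw [lintegral_indicator measurableSet_Ioi, lintegral_const_mul _ (by fun_prop),
    lintegral_Ioi_inv]
  exact ENNReal.mul_top (by simp)

/-- The Dirichlet energy of the zero-friction flow on the exterior of the unit disk is
infinite: `∫ |∇u_Z|² = ∞`; in particular the weighted `H¹` norm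
`(∫ |∇u_Z|² + (1 + r log r)⁻² |u_Z|²)^{1/2}` there is not finite. -/
theorem stmt_8 :
    (∫⁻ p in {p : ℝ × ℝ | 1 < p.1 ^ 2 + p.2 ^ 2},
        ENNReal.ofReal (frobSq uZ1 uZ2 p.1 p.2) ∂volume) = ⊤ ∧
    (∫⁻ p in {p : ℝ × ℝ | 1 < p.1 ^ 2 + p.2 ^ 2},
        ENNReal.ofReal (frobSq uZ1 uZ2 p.1 p.2 +
          ((1 + Real.sqrt (p.1 ^ 2 + p.2 ^ 2) *
              Real.log (Real.sqrt (p.1 ^ 2 + p.2 ^ 2)))⁻¹) ^ 2 *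
            (uZ1 p.1 p.2 ^ 2 + uZ2 p.1 p.2 ^ 2)) ∂volume) = ⊤ := by
  have henergy : (∫⁻ p in {p : ℝ × ℝ | 1 < p.1 ^ 2 + p.2 ^ 2},
      ENNReal.ofReal (frobSq uZ1 uZ2 p.1 p.2) ∂volume) = ⊤ := by
    refine top_le_iff.mp ?_
    rw [← lintegral_sector]
    refine (setLIntegral_mono' measurableSet_sector fun p hp => ?_).trans
      (lintegral_mono_set fun p hp => ?_)
    · exact ENNReal.ofReal_le_ofReal (frobSq_lower_bound hp.1 hp.2.1 hp.2.2)
    · change 1 < p.1 ^ 2 + p.2 ^ 2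
      nlinarith [hp.1, sq_nonneg p.2]
  refine ⟨henergy, top_le_iff.mp ?_⟩
  rw [← henergy]
  exact lintegral_mono fun p => ENNReal.ofReal_le_ofReal (le_add_of_nonneg_right (by positivity))

end
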